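/- (From μ-GDP to (ε, δ)-differential privacy.) Let P and Q be probability measures on a measurable space Ω and let μ > 0. Suppose that for every measurable set A with 0 < P(A) < 1 one has Q(A) ≤ 1 − Φ(Φ⁻¹(1 − P(A)) − μ), and that Q(A) = 0 whenever P(A) = 0. Then for every ε ≥ 0 and every measurable set A, Q(A) ≤ e^ε·P(A) + δ_μ(ε), where δ_μ(ε) = Φ(−ε/μ + μ/2) − e^ε·Φ(−ε/μ − μ/2). -/

import Mathlib

/-!
Everything is compared with the pair `N(0, 1)`, `N(μ, 1)`. The ratio of its densities is increasing,
so `N(μ, 1)(S) - e^ε N(0, 1)(S)` is largest when `S` is a half-line `[c, ∞)`, and the largest value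
is `δ_μ(ε)`. A half-line `(t, ∞)` of `N(0, 1)`-mass `α ∈ (0, 1)` has `N(μ, 1)`-mass `1 - G_μ(α)`,
which gives `1 - G_μ(α) ≤ e^ε α + δ_μ(ε)`. The sets `∅` and `ℝ` cover `α = 0` and `α = 1`.
-/

open MeasureTheory ProbabilityTheory Real

/-- The standard normal CDF `Φ`. -/
noncomputable def Phi : ℝ → ℝ := fun x => cdf (gaussianReal 0 1) x

/-- The inverse `Φ⁻¹` of the standard normal CDF (as a function on `(0,1)`). -/
noncomputable def PhiInv : ℝ → ℝ := Function.invFun Phi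

open Set
open scoped NNReal

/-- The Gaussian trade-off function `G_μ`: for `0 < α < 1`, the least type II error of a test of
`N(0, 1)` against `N(μ, 1)` with type I error `α`. For `α` outside `(0, 1)` the value is junk,
because `PhiInv` is. -/
noncomputable def gaussianTradeoff (μ α : ℝ) : ℝ := Phi (PhiInv (1 - α) - μ)

/-- The privacy profile `δ_μ(ε)` of `μ`-GDP. -/
noncomputable def gaussianDelta (μ ε : ℝ) : ℝ :=
  Phi (-ε / μ + μ / 2) - exp ε * Phi (-ε / μ - μ / 2)

section LikelihoodRatio

variable {a b : ℝ} {v : ℝ≥0}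

lemma gaussianPDFReal_eq_exp_mul_gaussianPDFReal (a b : ℝ) (v : ℝ≥0) (x : ℝ) :
    gaussianPDFReal b v x = exp ((b - a) * (x - (a + b) / 2) / v) * gaussianPDFReal a v x := by
  simp only [gaussianPDFReal]
  rw [mul_left_comm, ← exp_add]
  ring_nf

lemma exp_mul_gaussianPDFReal_le_iff (hab : a < b) (hv : v ≠ 0) (ε x : ℝ) :
    exp ε * gaussianPDFReal a v x ≤ gaussianPDFReal b v x ↔
      v * ε / (b - a) + (a + b) / 2 ≤ x := by
  rw [gaussianPDFReal_eq_exp_mul_gaussianPDFReal a b,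
    mul_le_mul_iff_left₀ (gaussianPDFReal_pos a v x hv), exp_le_exp,
    le_div_iff₀ (NNReal.coe_pos.2 hv.pos), ← le_sub_iff_add_le, div_le_iff₀ (sub_pos.2 hab),
    mul_comm ε, mul_comm (b - a)]

lemma gaussianReal_real_eq_setIntegral (a : ℝ) (hv : v ≠ 0) (S : Set ℝ) :
    (gaussianReal a v).real S = ∫ x in S, gaussianPDFReal a v x := by
  rw [measureReal_def, gaussianReal_apply_eq_integral a hv,
    ENNReal.toReal_ofReal (integral_nonneg fun x ↦ gaussianPDFReal_nonneg a v x)]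

theorem gaussianReal_real_sub_exp_mul_le_Ici (hab : a < b) (hv : v ≠ 0) (ε : ℝ) {S : Set ℝ}
    (hS : MeasurableSet S) :
    (gaussianReal b v).real S - exp ε * (gaussianReal a v).real S ≤
      (gaussianReal b v).real (Ici (v * ε / (b - a) + (a + b) / 2)) -
        exp ε * (gaussianReal a v).real (Ici (v * ε / (b - a) + (a + b) / 2)) := by
  let g : ℝ → ℝ := fun x ↦ gaussianPDFReal b v x - exp ε * gaussianPDFReal a v x
  have hb := integrable_gaussianPDFReal b v
  have ha := (integrable_gaussianPDFReal a v).const_mul (exp ε)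
  have eq_setIntegral (T : Set ℝ) :
      (gaussianReal b v).real T - exp ε * (gaussianReal a v).real T = ∫ x in T, g x := by
    rw [integral_sub hb.integrableOn ha.integrableOn, integral_const_mul,
      gaussianReal_real_eq_setIntegral b hv, gaussianReal_real_eq_setIntegral a hv]
  have nonneg_eq_Ici : {x | 0 ≤ g x} = Ici (v * ε / (b - a) + (a + b) / 2) :=
    Set.ext fun x ↦ sub_nonneg.trans (exp_mul_gaussianPDFReal_le_iff hab hv ε x)
  rw [eq_setIntegral, eq_setIntegral, ← nonneg_eq_Ici]
  have hg : StronglyMeasurable g := (stronglyMeasurable_gaussianPDFReal b v).sub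
    ((stronglyMeasurable_gaussianPDFReal a v).const_mul (exp ε))
  exact setIntegral_le_nonneg hS hg (hb.sub ha)

end LikelihoodRatio

section StandardNormalCDF

lemma continuous_cdf (ν : Measure ℝ) [IsProbabilityMeasure ν] [NullSingletonClass ν] :
    Continuous (cdf ν) := by
  refine continuous_iff_continuousAt.2 fun x ↦ continuousAt_iff_continuous_left'_right'.2
    ⟨?_, ((cdf ν).right_continuous x).mono Ioi_subset_Ici_self⟩
  have jump_nonpos : cdf ν x - Function.leftLim (cdf ν) x ≤ 0 := by
    rw [← ENNReal.ofReal_eq_zero, ← StieltjesFunction.measure_singleton, measure_cdf,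
      measure_singleton]
  exact (monotone_cdf ν).continuousWithinAt_Iio_iff_leftLim_eq.2
    (((monotone_cdf ν).leftLim_le le_rfl).antisymm (sub_nonpos.1 jump_nonpos))

lemma Ioo_subset_range_cdf (ν : Measure ℝ) [IsProbabilityMeasure ν] [NullSingletonClass ν] :
    Ioo 0 1 ⊆ range (cdf ν) := fun _ hp ↦
  mem_range_of_exists_le_of_exists_ge (continuous_cdf ν)
    ((tendsto_cdf_atBot ν).eventually_le_const hp.1).exists
    ((tendsto_cdf_atTop ν).eventually_const_le hp.2).exists

lemma Phi_PhiInv {p : ℝ} (hp : p ∈ Ioo 0 1) : Phi (PhiInv p) = p :=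
  haveI : NullSingletonClass (gaussianReal 0 1) := nullSingletonClass_gaussianReal one_ne_zero
  Function.invFun_eq (Ioo_subset_range_cdf (gaussianReal 0 1) hp)

lemma gaussianReal_real_Ioi (m t : ℝ) : (gaussianReal m 1).real (Ioi t) = 1 - Phi (t - m) := by
  have hIic : (gaussianReal m 1).real (Iic t) = Phi (t - m) := by
    have hmap := gaussianReal_map_const_add (μ := 0) (v := 1) m
    rw [zero_add] at hmap
    rw [Phi, cdf_eq_real, ← hmap, map_measureReal_apply (by fun_prop) measurableSet_Iic,
      preimage_const_add_Iic]
  rw [← compl_Iic, probReal_compl_eq_one_sub measurableSet_Iic, hIic]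

lemma gaussianReal_real_Ici (m t : ℝ) : (gaussianReal m 1).real (Ici t) = Phi (m - t) := by
  have hmap := gaussianReal_map_const_sub (μ := 0) (v := 1) m
  rw [sub_zero] at hmap
  rw [Phi, cdf_eq_real, ← hmap, map_measureReal_apply (by fun_prop) measurableSet_Ici,
    preimage_const_sub_Ici]

end StandardNormalCDF

section GaussianTradeoff

variable {μ : ℝ}

theorem gaussianReal_real_sub_exp_mul_le_gaussianDelta (hμ : 0 < μ) (ε : ℝ) {S : Set ℝ}
    (hS : MeasurableSet S) :
    (gaussianReal μ 1).real S - exp ε * (gaussianReal 0 1).real S ≤ gaussianDelta μ ε := by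
  refine (gaussianReal_real_sub_exp_mul_le_Ici hμ one_ne_zero ε hS).trans_eq ?_
  rw [gaussianReal_real_Ici, gaussianReal_real_Ici, gaussianDelta, NNReal.coe_one]
  ring_nf

lemma gaussianDelta_nonneg (hμ : 0 < μ) (ε : ℝ) : 0 ≤ gaussianDelta μ ε := by
  simpa using gaussianReal_real_sub_exp_mul_le_gaussianDelta hμ ε MeasurableSet.empty

lemma one_sub_exp_le_gaussianDelta (hμ : 0 < μ) (ε : ℝ) : 1 - exp ε ≤ gaussianDelta μ ε := by
  simpa using gaussianReal_real_sub_exp_mul_le_gaussianDelta hμ ε MeasurableSet.univ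

theorem one_sub_gaussianTradeoff_le (hμ : 0 < μ) (ε : ℝ) {α : ℝ} (hα : α ∈ Ioo 0 1) :
    1 - gaussianTradeoff μ α ≤ exp ε * α + gaussianDelta μ ε := by
  let t := PhiInv (1 - α)
  have mass_zero : (gaussianReal 0 1).real (Ioi t) = α := by
    rw [gaussianReal_real_Ioi, sub_zero, Phi_PhiInv ⟨sub_pos.2 hα.2, sub_lt_self 1 hα.1⟩,
      sub_sub_cancel]
  have mass_mu : (gaussianReal μ 1).real (Ioi t) = 1 - gaussianTradeoff μ α :=
    gaussianReal_real_Ioi μ t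
  rw [← mass_mu, ← sub_le_iff_le_add']
  simpa only [mass_zero] using
    gaussianReal_real_sub_exp_mul_le_gaussianDelta hμ ε (measurableSet_Ioi (a := t))

end GaussianTradeoff

theorem stmt_4_general {Ω : Type*} [MeasurableSpace Ω] {P Q : Measure Ω}
    [IsProbabilityMeasure P] [IsProbabilityMeasure Q] {μ : ℝ} (hμ : 0 < μ)
    (hGDP : ∀ A : Set Ω, MeasurableSet A → 0 < P.real A → P.real A < 1 →
      Q.real A ≤ 1 - gaussianTradeoff μ (P.real A))
    (hQP : Q ≪ P) (ε : ℝ) {A : Set Ω} (hA : MeasurableSet A) :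
    Q.real A ≤ exp ε * P.real A + gaussianDelta μ ε := by
  rcases (measureReal_nonneg (μ := P) (s := A)).eq_or_lt with hP_zero | hP_pos
  · have hQ_zero : Q A = 0 := hQP ((measureReal_eq_zero_iff (μ := P)).1 hP_zero.symm)
    rw [← hP_zero, measureReal_def, hQ_zero, mul_zero, zero_add]
    exact gaussianDelta_nonneg hμ ε
  rcases (measureReal_le_one (μ := P) (s := A)).eq_or_lt with hP_one | hP_lt
  · rw [hP_one, mul_one, ← sub_le_iff_le_add']
    exact (sub_le_sub_right measureReal_le_one _).trans (one_sub_exp_le_gaussianDelta hμ ε)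
  · exact (hGDP A hA hP_pos hP_lt).trans (one_sub_gaussianTradeoff_le hμ ε ⟨hP_pos, hP_lt⟩)

/-- From `μ`-GDP to `(ε, δ)`-differential privacy: if the pair `(P, Q)` satisfies
the `μ`-GDP trade-off bound on indicator tests, then it satisfies the
`(ε, δ_μ(ε))`-DP (hockey-stick) inequality for every `ε ≥ 0`. -/
theorem stmt_4 {Ω : Type*} [MeasurableSpace Ω] (P Q : Measure Ω)
    [IsProbabilityMeasure P] [IsProbabilityMeasure Q] (μ : ℝ) (hμ : 0 < μ)
    (hGDP : ∀ A : Set Ω, MeasurableSet A → 0 < (P A).toReal → (P A).toReal < 1 →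
      (Q A).toReal ≤ 1 - Phi (PhiInv (1 - (P A).toReal) - μ))
    (hzero : ∀ A : Set Ω, MeasurableSet A → P A = 0 → Q A = 0)
    (ε : ℝ) (hε : 0 ≤ ε) (A : Set Ω) (hA : MeasurableSet A) :
    (Q A).toReal ≤ Real.exp ε * (P A).toReal +
      (Phi (-ε / μ + μ / 2) - Real.exp ε * Phi (-ε / μ - μ / 2)) := by
  exact stmt_4_general hμ hGDP (.mk hzero) ε hA
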